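/- arXiv:2312.01063 — 5 statements merged into one kernel-verified Lean document; each statement's English description precedes it below -/
import Mathlib

section
/- Let μ, λ, v ∈ ℂ and let f, g : ℝ² → ℂ be smooth functions. Suppose f satisfies the bilinear Boussinesq equation f∂_x⁴f − 4(∂_xf)(∂_x³f) + 3(∂_x²f)² − f∂_x²f + (∂_xf)² − f∂_y²f + (∂_yf)² = 0 on all of ℝ², and suppose the pair (f,g) satisfies the Bäcklund system (D_x² + μD_x + (i/√3)D_y − λ) f·g = 0 and ((3λ−1)D_x − √3 i μ D_y + D_x³ − √3 i D_x D_y + v) f·g = 0 on all of ℝ². Then g satisfies the bilinear Boussinesq equation g∂_x⁴g − 4(∂_xg)(∂_x³g) + 3(∂_x²g)² − g∂_x²g + (∂_xg)² − g∂_y²g + (∂_yg)² = 0 at every point (x,y) where f(x,y) ≠ 0. -/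
/-!
Write `N = f g`, `d = D_x f·g`, `a = i/√3`, and let `B₁`, `B₂` be the left-hand sides of the two
equations of the Bäcklund system and `P(τ)` that of the bilinear Boussinesq equation.  The proof
rests on the identity, valid for all smooth `f`, `g` because `a² = -1/3`,

  `g² P(f) - f² P(g) = (N ∂ₓB₂ - B₂ ∂ₓN) + 3a (N ∂_yB₁ - B₁ ∂_yN) + 3 (B₁ ∂ₓd - d ∂ₓB₁)`.

It is found in the variables `φ = log (f/g)`, `ρ = log (f g)`: there
`B₁/N = ρₓₓ + φₓ² + μ φₓ + a φ_y - λ`, while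
`P(f)/f² - P(g)/g² = φₓₓₓₓ + 6 ρₓₓ φₓₓ - φₓₓ - φ_yy`, and the latter equals
`∂ₓ(B₂/N) + 3a ∂_y(B₁/N) + 3 (φₓₓ B₁/N - φₓ ∂ₓ(B₁/N))`.
Multiplied by `N²` it becomes polynomial in the derivatives of `f` and `g`, so the zeros of `f` and
`g` do no harm.  If `B₁`, `B₂` and `P(f)` vanish identically, then `f² P(g) = 0`.

The analytic input is that the iterated partial derivatives of a smooth function are smooth
(`Smooth2.pdx`, `Smooth2.pdy`) and commute (`Smooth2.comm`).
-/

open Complex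

/-- Partial derivative in the first (`x`) variable of a function `ℝ → ℝ → ℂ`. -/
noncomputable def pdx (f : ℝ → ℝ → ℂ) : ℝ → ℝ → ℂ := fun x y => deriv (fun t => f t y) x

/-- Partial derivative in the second (`y`) variable of a function `ℝ → ℝ → ℂ`. -/
noncomputable def pdy (f : ℝ → ℝ → ℂ) : ℝ → ℝ → ℂ := fun x y => deriv (fun t => f x t) y

/-- Hirota operator `D_x f·g`. -/
noncomputable def Dx (f g : ℝ → ℝ → ℂ) (x y : ℝ) : ℂ :=
  pdx f x y * g x y - f x y * pdx g x y

/-- Hirota operator `D_y f·g`. -/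
noncomputable def Dy (f g : ℝ → ℝ → ℂ) (x y : ℝ) : ℂ :=
  pdy f x y * g x y - f x y * pdy g x y

/-- Hirota operator `D_x² f·g`. -/
noncomputable def Dx2 (f g : ℝ → ℝ → ℂ) (x y : ℝ) : ℂ :=
  pdx (pdx f) x y * g x y - 2 * pdx f x y * pdx g x y + f x y * pdx (pdx g) x y

/-- Hirota operator `D_x D_y f·g`. -/
noncomputable def Dxy (f g : ℝ → ℝ → ℂ) (x y : ℝ) : ℂ :=
  pdx (pdy f) x y * g x y - pdx f x y * pdy g x y - pdy f x y * pdx g x y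
    + f x y * pdx (pdy g) x y

/-- Hirota operator `D_x³ f·g`. -/
noncomputable def Dx3 (f g : ℝ → ℝ → ℂ) (x y : ℝ) : ℂ :=
  pdx (pdx (pdx f)) x y * g x y - 3 * pdx (pdx f) x y * pdx g x y
    + 3 * pdx f x y * pdx (pdx g) x y - f x y * pdx (pdx (pdx g)) x y

/-- The bilinear Boussinesq equation `(D_x⁴ − D_x² − D_y²) τ·τ = 0` at `(x,y)`,
written out: `τ∂ₓ⁴τ − 4(∂ₓτ)(∂ₓ³τ) + 3(∂ₓ²τ)² − τ∂ₓ²τ + (∂ₓτ)² − τ∂_y²τ + (∂_yτ)² = 0`. -/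
def BilinearBoussinesqAt (τ : ℝ → ℝ → ℂ) (x y : ℝ) : Prop :=
  τ x y * pdx (pdx (pdx (pdx τ))) x y
    - 4 * pdx τ x y * pdx (pdx (pdx τ)) x y
    + 3 * (pdx (pdx τ) x y)^2
    - τ x y * pdx (pdx τ) x y
    + (pdx τ x y)^2
    - τ x y * pdy (pdy τ) x y
    + (pdy τ x y)^2 = 0

/-- Joint smoothness of a curried function of two real variables. -/
def Smooth2 (f : ℝ → ℝ → ℂ) : Prop :=
  ContDiff ℝ (⊤ : ℕ∞) (fun p : ℝ × ℝ => f p.1 p.2)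

namespace Smooth2

variable {f : ℝ → ℝ → ℂ}

lemma hasFDerivAt (hf : Smooth2 f) (p : ℝ × ℝ) :
    HasFDerivAt (fun p : ℝ × ℝ => f p.1 p.2) (fderiv ℝ (fun p : ℝ × ℝ => f p.1 p.2) p) p :=
  (ContDiff.differentiable hf (by simp) p).hasFDerivAt

lemma hasDerivAt_fderiv_x (hf : Smooth2 f) (x y : ℝ) :
    HasDerivAt (fun t => f t y) (fderiv ℝ (fun p : ℝ × ℝ => f p.1 p.2) (x, y) (1, 0)) x :=
  HasFDerivAt.comp_hasDerivAt (f := fun t => (t, y)) x (hf.hasFDerivAt (x, y)) ((hasDerivAt_id x).prodMk (hasDerivAt_const x y))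

lemma hasDerivAt_fderiv_y (hf : Smooth2 f) (x y : ℝ) :
    HasDerivAt (fun t => f x t) (fderiv ℝ (fun p : ℝ × ℝ => f p.1 p.2) (x, y) (0, 1)) y :=
  HasFDerivAt.comp_hasDerivAt (f := fun t => (x, t)) y (hf.hasFDerivAt (x, y)) ((hasDerivAt_const y x).prodMk (hasDerivAt_id y))

lemma pdx_eq (hf : Smooth2 f) (x y : ℝ) :
    _root_.pdx f x y = fderiv ℝ (fun p : ℝ × ℝ => f p.1 p.2) (x, y) (1, 0) :=
  (hf.hasDerivAt_fderiv_x x y).deriv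

lemma pdy_eq (hf : Smooth2 f) (x y : ℝ) :
    _root_.pdy f x y = fderiv ℝ (fun p : ℝ × ℝ => f p.1 p.2) (x, y) (0, 1) :=
  (hf.hasDerivAt_fderiv_y x y).deriv

lemma hx (hf : Smooth2 f) (x y : ℝ) : HasDerivAt (fun t => f t y) (_root_.pdx f x y) x := by
  rw [hf.pdx_eq]; exact hf.hasDerivAt_fderiv_x x y

lemma hy (hf : Smooth2 f) (x y : ℝ) : HasDerivAt (fun t => f x t) (_root_.pdy f x y) y := by
  rw [hf.pdy_eq]; exact hf.hasDerivAt_fderiv_y x y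

lemma contDiff_fderiv (hf : Smooth2 f) :
    ContDiff ℝ (⊤ : ℕ∞) (fderiv ℝ (fun p : ℝ × ℝ => f p.1 p.2)) :=
  ContDiff.fderiv_right hf (by simp)

lemma pdx (hf : Smooth2 f) : Smooth2 (pdx f) := by
  have h := hf.contDiff_fderiv.clm_apply (contDiff_const (c := ((1, 0) : ℝ × ℝ)))
  rw [Smooth2, funext fun p : ℝ × ℝ => hf.pdx_eq p.1 p.2]
  exact h

lemma pdy (hf : Smooth2 f) : Smooth2 (pdy f) := by
  have h := hf.contDiff_fderiv.clm_apply (contDiff_const (c := ((0, 1) : ℝ × ℝ)))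
  rw [Smooth2, funext fun p : ℝ × ℝ => hf.pdy_eq p.1 p.2]
  exact h

/-- Symmetry of the second derivative, in terms of `pdx` and `pdy`. -/
lemma comm (hf : Smooth2 f) : _root_.pdy (_root_.pdx f) = _root_.pdx (_root_.pdy f) := by
  funext x y
  have hd : DifferentiableAt ℝ (fderiv ℝ (fun p : ℝ × ℝ => f p.1 p.2)) (x, y) :=
    hf.contDiff_fderiv.differentiable (by simp) _
  have hsym : IsSymmSndFDerivAt ℝ (fun p : ℝ × ℝ => f p.1 p.2) (x, y) :=
    (ContDiff.contDiffAt hf).isSymmSndFDerivAt (by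
      rw [minSmoothness_of_isRCLikeNormedField]; exact WithTop.coe_le_coe.mpr (le_top : (2 : ℕ∞) ≤ ⊤))
  have e1 : (fun p : ℝ × ℝ => _root_.pdx f p.1 p.2)
      = fun p => fderiv ℝ (fun p : ℝ × ℝ => f p.1 p.2) p (1, 0) :=
    funext fun p => hf.pdx_eq p.1 p.2
  have e2 : (fun p : ℝ × ℝ => _root_.pdy f p.1 p.2)
      = fun p => fderiv ℝ (fun p : ℝ × ℝ => f p.1 p.2) p (0, 1) :=
    funext fun p => hf.pdy_eq p.1 p.2
  rw [hf.pdx.pdy_eq, hf.pdy.pdx_eq, e1, e2,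
    fderiv_clm_apply hd (differentiableAt_const _), fderiv_clm_apply hd (differentiableAt_const _)]
  simpa using hsym.eq (0, 1) (1, 0)

end Smooth2

/-- If `F` vanishes identically, any derivative it has is zero. -/
lemma hasDerivAt_eq_zero {F : ℝ → ℂ} {c : ℂ} {x : ℝ} (h : HasDerivAt F c x)
    (h0 : ∀ t, F t = 0) : c = 0 := by
  obtain rfl : F = fun _ => 0 := funext h0
  exact h.unique (hasDerivAt_const x 0)

/-- the Bäcklund transformation maps solutions of the bilinear Boussinesq
equation to solutions, away from the zero set of `f`. -/
theorem backlund_transforms_solutions (μ lam v : ℂ) (f g : ℝ → ℝ → ℂ)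
    (hf : ContDiff ℝ (⊤ : ℕ∞) (fun p : ℝ × ℝ => f p.1 p.2))
    (hg : ContDiff ℝ (⊤ : ℕ∞) (fun p : ℝ × ℝ => g p.1 p.2))
    (hfbil : ∀ x y : ℝ, BilinearBoussinesqAt f x y)
    (hback1 : ∀ x y : ℝ,
      Dx2 f g x y + μ * Dx f g x y + (I / (Real.sqrt 3 : ℂ)) * Dy f g x y
        - lam * (f x y * g x y) = 0)
    (hback2 : ∀ x y : ℝ,
      (3 * lam - 1) * Dx f g x y - (Real.sqrt 3 : ℂ) * I * μ * Dy f g x y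
        + Dx3 f g x y - (Real.sqrt 3 : ℂ) * I * Dxy f g x y
        + v * (f x y * g x y) = 0) :
    ∀ x y : ℝ, f x y ≠ 0 → BilinearBoussinesqAt g x y := by
  intro x y hfxy
  have Sf : Smooth2 f := hf
  have Sg : Smooth2 g := hg
  -- `a = i/√3`, so that `√3 i = 3a`
  obtain ⟨a, ha⟩ : ∃ a : ℂ, a = I / (Real.sqrt 3 : ℂ) := ⟨_, rfl⟩
  have hs : (Real.sqrt 3 : ℂ) ^ 2 = 3 := by
    rw [← Complex.ofReal_pow, Real.sq_sqrt (by norm_num)]; norm_num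
  have hs0 : (Real.sqrt 3 : ℂ) ≠ 0 := by
    intro h; rw [h] at hs; norm_num at hs
  have ha2 : a ^ 2 = -1 / 3 := by
    rw [ha, div_pow, hs, I_sq]
  have hsa : (Real.sqrt 3 : ℂ) * I = 3 * a := by
    rw [ha, ← hs]; field_simp
  rw [← ha] at hback1
  rw [hsa] at hback2
  -- the derivatives of the two equations of the system, computed by the product rule
  have B1x := hasDerivAt_eq_zero (x := x)
    (F := fun t => Dx2 f g t y + μ * Dx f g t y + a * Dy f g t y - lam * (f t y * g t y))
    (((((((Sf.pdx.pdx.hx x y).mul (Sg.hx x y)).sub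
          (((Sf.pdx.hx x y).const_mul 2).mul (Sg.pdx.hx x y))).add
          ((Sf.hx x y).mul (Sg.pdx.pdx.hx x y))).add
        ((((Sf.pdx.hx x y).mul (Sg.hx x y)).sub
          ((Sf.hx x y).mul (Sg.pdx.hx x y))).const_mul μ)).add
        ((((Sf.pdy.hx x y).mul (Sg.hx x y)).sub
          ((Sf.hx x y).mul (Sg.pdy.hx x y))).const_mul a)).sub
      (((Sf.hx x y).mul (Sg.hx x y)).const_mul lam)) (fun t => hback1 t y)
  have B1y := hasDerivAt_eq_zero (x := y)
    (F := fun t => Dx2 f g x t + μ * Dx f g x t + a * Dy f g x t - lam * (f x t * g x t))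
    (((((((Sf.pdx.pdx.hy x y).mul (Sg.hy x y)).sub
          (((Sf.pdx.hy x y).const_mul 2).mul (Sg.pdx.hy x y))).add
          ((Sf.hy x y).mul (Sg.pdx.pdx.hy x y))).add
        ((((Sf.pdx.hy x y).mul (Sg.hy x y)).sub
          ((Sf.hy x y).mul (Sg.pdx.hy x y))).const_mul μ)).add
        ((((Sf.pdy.hy x y).mul (Sg.hy x y)).sub
          ((Sf.hy x y).mul (Sg.pdy.hy x y))).const_mul a)).sub
      (((Sf.hy x y).mul (Sg.hy x y)).const_mul lam)) (fun t => hback1 x t)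
  have B2x := hasDerivAt_eq_zero (x := x)
    (F := fun t => (3 * lam - 1) * Dx f g t y - 3 * a * μ * Dy f g t y
        + Dx3 f g t y - 3 * a * Dxy f g t y + v * (f t y * g t y))
    ((((((((Sf.pdx.hx x y).mul (Sg.hx x y)).sub
          ((Sf.hx x y).mul (Sg.pdx.hx x y))).const_mul (3 * lam - 1)).sub
        ((((Sf.pdy.hx x y).mul (Sg.hx x y)).sub
          ((Sf.hx x y).mul (Sg.pdy.hx x y))).const_mul (3 * a * μ))).add
        (((((Sf.pdx.pdx.pdx.hx x y).mul (Sg.hx x y)).sub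
          (((Sf.pdx.pdx.hx x y).const_mul 3).mul (Sg.pdx.hx x y))).add
          (((Sf.pdx.hx x y).const_mul 3).mul (Sg.pdx.pdx.hx x y))).sub
          ((Sf.hx x y).mul (Sg.pdx.pdx.pdx.hx x y)))).sub
        ((((((Sf.pdy.pdx.hx x y).mul (Sg.hx x y)).sub
          ((Sf.pdx.hx x y).mul (Sg.pdy.hx x y))).sub
          ((Sf.pdy.hx x y).mul (Sg.pdx.hx x y))).add
          ((Sf.hx x y).mul (Sg.pdy.pdx.hx x y))).const_mul (3 * a))).add
      (((Sf.hx x y).mul (Sg.hx x y)).const_mul v)) (fun t => hback2 t y)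
  have B1 := hback1 x y
  have B2 := hback2 x y
  have Pf := hfbil x y
  rw [Sf.pdx.comm, Sg.pdx.comm, Sf.comm, Sg.comm] at B1y
  simp only [BilinearBoussinesqAt, Dx, Dy, Dx2, Dxy, Dx3] at B1 B2 Pf B1x B1y B2x ⊢
  refine (mul_eq_zero.mp ?_).resolve_left (pow_ne_zero 2 hfxy)
  linear_combination (g x y) ^ 2 * Pf
    - (f x y * g x y * B2x - (pdx f x y * g x y + f x y * pdx g x y) * B2)
    - 3 * a * (f x y * g x y * B1y - (pdy f x y * g x y + f x y * pdy g x y) * B1)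
    - 3 * ((pdx (pdx f) x y * g x y - f x y * pdx (pdx g) x y) * B1
      - (pdx f x y * g x y - f x y * pdx g x y) * B1x)
    + 3 * (f x y * g x y * (pdy (pdy f) x y * g x y - f x y * pdy (pdy g) x y)
      - (pdy f x y * g x y + f x y * pdy g x y)
        * (pdy f x y * g x y - f x y * pdy g x y)) * ha2
end

section
/- Let n, j, k be natural numbers, let (x,y) ∈ ℝ² with (x,y) ≠ (0,0), and set z = x + iy, z̄ = x − iy. Then, with integer (zpow) powers of the nonzero complex numbers z, z̄: D_x²(zⁿz̄ⁿ)·(z^j z̄^k) = [n(n−1) − 2nj + j(j−1)] z^{j+n−2} z̄^{n+k} + [2n² − 2nk − 2nj + 2jk] z^{j+n−1} z̄^{n+k−1} + [n(n−1) − 2nk + k(k−1)] z^{j+n} z̄^{n+k−2}, and D_x D_y(zⁿz̄ⁿ)·(z^j z̄^k) = i[n(n−1) − 2nj + j(j−1)] z^{j+n−2} z̄^{k+n} − i[n(n−1) − 2nk + k(k−1)] z^{j+n} z̄^{k+n−2}. -/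
/-!
In the coordinates `z = x + iy`, `z̄ = x - iy` one has `∂_x = ∂_z + ∂_z̄` and `∂_y = i (∂_z - ∂_z̄)`,
so every partial derivative of a monomial `z^p z̄^q` is a combination of monomials (`pdx_mono`,
`pdy_mono`). With natural exponents these formulas hold on the whole plane, hence can be
differentiated again. Away from the origin each second derivative equals `z^p z̄^q` times an explicit
polynomial in `z⁻¹` and `z̄⁻¹` (`pdx_pdx_mono`, `pdx_pdy_mono`); substituting these logarithmic forms
into the Hirota operators leaves an identity of rational functions.
-/

open Complex

/-- The monomial `z^p z̄^q` as a function of the real coordinates. -/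
noncomputable def mono (p q : ℕ) : ℝ → ℝ → ℂ :=
  fun a b => ((a : ℂ) + (b : ℂ) * I) ^ p * ((a : ℂ) - (b : ℂ) * I) ^ q

lemma hasDerivAt_mono_fst (p q : ℕ) (x y : ℝ) :
    HasDerivAt (fun t => mono p q t y) (p * mono (p - 1) q x y + q * mono p (q - 1) x y) x := by
  have h : HasDerivAt (fun t : ℝ => (t : ℂ)) 1 x := Complex.ofRealCLM.hasDerivAt
  have key := ((h.add_const ((y : ℂ) * I)).fun_pow p).mul ((h.sub_const ((y : ℂ) * I)).fun_pow q)
  refine key.congr_deriv ?_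
  simp only [mono]
  ring

lemma hasDerivAt_mono_snd (p q : ℕ) (x y : ℝ) :
    HasDerivAt (fun t => mono p q x t)
      (I * (p * mono (p - 1) q x y - q * mono p (q - 1) x y)) y := by
  have h : HasDerivAt (fun t : ℝ => (t : ℂ)) 1 y := Complex.ofRealCLM.hasDerivAt
  have key := (((h.mul_const I).const_add (x : ℂ)).fun_pow p).mul
    (((h.mul_const I).const_sub (x : ℂ)).fun_pow q)
  refine key.congr_deriv ?_
  simp only [mono]
  ring

lemma pdx_mono (p q : ℕ) :
    pdx (mono p q) = fun x y => p * mono (p - 1) q x y + q * mono p (q - 1) x y := by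
  funext x y
  exact (hasDerivAt_mono_fst p q x y).deriv

lemma pdy_mono (p q : ℕ) :
    pdy (mono p q) = fun x y => I * (p * mono (p - 1) q x y - q * mono p (q - 1) x y) := by
  funext x y
  exact (hasDerivAt_mono_snd p q x y).deriv

/-- The truncated exponent `p - 1` is harmless, since the coefficient `p` vanishes at `p = 0`. -/
lemma natCast_mul_pow_pred (p : ℕ) {z : ℂ} (hz : z ≠ 0) :
    (p : ℂ) * z ^ (p - 1) = p * z⁻¹ * z ^ p := by
  cases p with
  | zero => simp
  | succ m =>
    rw [Nat.add_sub_cancel, pow_succ]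
    field_simp

/-- Lowering an exponent twice: both truncations are absorbed by vanishing coefficients. -/
lemma natCast_mul_pow_pred_pred (p : ℕ) {z : ℂ} (hz : z ≠ 0) :
    (p : ℂ) * (((p - 1 : ℕ) : ℂ) * z ^ (p - 1 - 1)) = p * (p - 1) * z⁻¹ ^ 2 * z ^ p := by
  rw [natCast_mul_pow_pred _ hz]
  cases p with
  | zero => simp
  | succ m =>
    rw [Nat.add_sub_cancel, pow_succ]
    push_cast
    field_simp
    ring

lemma pdx_mono_apply {x y : ℝ} (hz : (x : ℂ) + (y : ℂ) * I ≠ 0)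
    (hw : (x : ℂ) - (y : ℂ) * I ≠ 0) (p q : ℕ) :
    pdx (mono p q) x y
      = (p * ((x : ℂ) + (y : ℂ) * I)⁻¹ + q * ((x : ℂ) - (y : ℂ) * I)⁻¹) * mono p q x y := by
  have h1 := natCast_mul_pow_pred p hz
  have h2 := natCast_mul_pow_pred q hw
  rw [pdx_mono]
  simp only [mono]
  linear_combination ((x : ℂ) - (y : ℂ) * I) ^ q * h1 + ((x : ℂ) + (y : ℂ) * I) ^ p * h2

lemma pdy_mono_apply {x y : ℝ} (hz : (x : ℂ) + (y : ℂ) * I ≠ 0)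
    (hw : (x : ℂ) - (y : ℂ) * I ≠ 0) (p q : ℕ) :
    pdy (mono p q) x y
      = I * (p * ((x : ℂ) + (y : ℂ) * I)⁻¹ - q * ((x : ℂ) - (y : ℂ) * I)⁻¹) * mono p q x y := by
  have h1 := natCast_mul_pow_pred p hz
  have h2 := natCast_mul_pow_pred q hw
  rw [pdy_mono]
  simp only [mono]
  linear_combination I * ((x : ℂ) - (y : ℂ) * I) ^ q * h1 - I * ((x : ℂ) + (y : ℂ) * I) ^ p * h2

lemma pdx_pdx_mono {x y : ℝ} (hz : (x : ℂ) + (y : ℂ) * I ≠ 0)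
    (hw : (x : ℂ) - (y : ℂ) * I ≠ 0) (p q : ℕ) :
    pdx (pdx (mono p q)) x y
      = (p * (p - 1) * ((x : ℂ) + (y : ℂ) * I)⁻¹ ^ 2
          + 2 * p * q * ((x : ℂ) + (y : ℂ) * I)⁻¹ * ((x : ℂ) - (y : ℂ) * I)⁻¹
          + q * (q - 1) * ((x : ℂ) - (y : ℂ) * I)⁻¹ ^ 2) * mono p q x y := by
  have h1 := natCast_mul_pow_pred p hz
  have h2 := natCast_mul_pow_pred q hw
  have h3 := natCast_mul_pow_pred_pred p hz
  have h4 := natCast_mul_pow_pred_pred q hw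
  have hd := (((hasDerivAt_mono_fst (p - 1) q x y).const_mul (p : ℂ)).fun_add
    ((hasDerivAt_mono_fst p (q - 1) x y).const_mul (q : ℂ))).deriv
  rw [pdx_mono]
  refine hd.trans ?_
  simp only [mono]
  linear_combination ((x : ℂ) - (y : ℂ) * I) ^ q * h3 + ((x : ℂ) + (y : ℂ) * I) ^ p * h4
    + 2 * q * ((x : ℂ) - (y : ℂ) * I) ^ (q - 1) * h1
    + 2 * p * ((x : ℂ) + (y : ℂ) * I)⁻¹ * ((x : ℂ) + (y : ℂ) * I) ^ p * h2

/-- The mixed terms `∂_z ∂_z̄` cancel because `∂_x ∂_y = i (∂_z² - ∂_z̄²)`. -/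
lemma pdx_pdy_mono {x y : ℝ} (hz : (x : ℂ) + (y : ℂ) * I ≠ 0)
    (hw : (x : ℂ) - (y : ℂ) * I ≠ 0) (p q : ℕ) :
    pdx (pdy (mono p q)) x y
      = I * (p * (p - 1) * ((x : ℂ) + (y : ℂ) * I)⁻¹ ^ 2
          - q * (q - 1) * ((x : ℂ) - (y : ℂ) * I)⁻¹ ^ 2) * mono p q x y := by
  have h3 := natCast_mul_pow_pred_pred p hz
  have h4 := natCast_mul_pow_pred_pred q hw
  have hd := ((((hasDerivAt_mono_fst (p - 1) q x y).const_mul (p : ℂ)).fun_sub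
    ((hasDerivAt_mono_fst p (q - 1) x y).const_mul (q : ℂ))).const_mul I).deriv
  rw [pdy_mono]
  refine hd.trans ?_
  simp only [mono]
  linear_combination I * ((x : ℂ) - (y : ℂ) * I) ^ q * h3
    - I * ((x : ℂ) + (y : ℂ) * I) ^ p * h4

/-- the Hirota bilinear identities for `D_x²(zⁿz̄ⁿ)·(z^j z̄^k)` and
`D_x D_y(zⁿz̄ⁿ)·(z^j z̄^k)`, with integer (`zpow`) powers of `z = x+iy` and `z̄ = x−iy`. -/
theorem hirota_monomials (n j k : ℕ) (x y : ℝ) (hxy : (x, y) ≠ ((0 : ℝ), (0 : ℝ)))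
    (z zb : ℂ) (hz : z = (x : ℂ) + (y : ℂ) * I) (hzb : zb = (x : ℂ) - (y : ℂ) * I) :
    Dx2 (fun a b => ((a : ℂ) + (b : ℂ) * I)^n * ((a : ℂ) - (b : ℂ) * I)^n)
        (fun a b => ((a : ℂ) + (b : ℂ) * I)^j * ((a : ℂ) - (b : ℂ) * I)^k) x y
      = ((n : ℂ) * ((n : ℂ) - 1) - 2 * (n : ℂ) * (j : ℂ) + (j : ℂ) * ((j : ℂ) - 1))
          * z ^ ((j : ℤ) + (n : ℤ) - 2) * zb ^ ((n : ℤ) + (k : ℤ))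
        + (2 * (n : ℂ)^2 - 2 * (n : ℂ) * (k : ℂ) - 2 * (n : ℂ) * (j : ℂ)
            + 2 * (j : ℂ) * (k : ℂ))
          * z ^ ((j : ℤ) + (n : ℤ) - 1) * zb ^ ((n : ℤ) + (k : ℤ) - 1)
        + ((n : ℂ) * ((n : ℂ) - 1) - 2 * (n : ℂ) * (k : ℂ) + (k : ℂ) * ((k : ℂ) - 1))
          * z ^ ((j : ℤ) + (n : ℤ)) * zb ^ ((n : ℤ) + (k : ℤ) - 2)
    ∧
    Dxy (fun a b => ((a : ℂ) + (b : ℂ) * I)^n * ((a : ℂ) - (b : ℂ) * I)^n)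
        (fun a b => ((a : ℂ) + (b : ℂ) * I)^j * ((a : ℂ) - (b : ℂ) * I)^k) x y
      = I * ((n : ℂ) * ((n : ℂ) - 1) - 2 * (n : ℂ) * (j : ℂ) + (j : ℂ) * ((j : ℂ) - 1))
          * z ^ ((j : ℤ) + (n : ℤ) - 2) * zb ^ ((k : ℤ) + (n : ℤ))
        - I * ((n : ℂ) * ((n : ℂ) - 1) - 2 * (n : ℂ) * (k : ℂ) + (k : ℂ) * ((k : ℂ) - 1))
          * z ^ ((j : ℤ) + (n : ℤ)) * zb ^ ((k : ℤ) + (n : ℤ) - 2) := by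
  have hprod : ((x : ℂ) + (y : ℂ) * I) * ((x : ℂ) - (y : ℂ) * I) ≠ 0 := by
    have h : ((x : ℂ) + (y : ℂ) * I) * ((x : ℂ) - (y : ℂ) * I) = ((x ^ 2 + y ^ 2 : ℝ) : ℂ) := by
      push_cast
      linear_combination -(y : ℂ) ^ 2 * I_sq
    rw [h, Complex.ofReal_ne_zero]
    intro h0
    exact hxy (Prod.ext (by nlinarith [sq_nonneg x, sq_nonneg y])
      (by nlinarith [sq_nonneg x, sq_nonneg y]))
  have hz0 := left_ne_zero_of_mul hprod
  have hw0 := right_ne_zero_of_mul hprod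
  change Dx2 (mono n n) (mono j k) x y = _ ∧ Dxy (mono n n) (mono j k) x y = _
  simp only [Dx2, Dxy, pdx_pdx_mono hz0 hw0, pdx_pdy_mono hz0 hw0, pdx_mono_apply hz0 hw0,
    pdy_mono_apply hz0 hw0, mono]
  rw [← hz, ← hzb] at *
  simp only [zpow_sub₀ hz0, zpow_sub₀ hw0, zpow_add₀ hz0, zpow_add₀ hw0, zpow_natCast,
    zpow_ofNat]
  constructor
  · field_simp
    ring
  · field_simp
    ring
end

section
/- Let n, j be natural numbers satisfying n(n−1) − 2nj + j(j−1) = 0, let (x,y) ∈ ℝ² with (x,y) ≠ (0,0), and set z = x + iy, z̄ = x − iy. Then D_x³(zⁿz̄ⁿ)·(z^j z̄ⁿ) = (6jn − 6n²) z^{j+n−1} z̄^{2n−2} + 2(j−n)(j+n−1) z^{j+n−3} z̄^{2n}, where integer powers with possibly negative exponent are interpreted as zpow on ℂ \ {0}. -/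
/-!
Write `∂ₓᵏ (z ^ n) = n (n - 1) ⋯ (n - k + 1) z ^ (n - k)` (`powD` below, with the same formula for
`z̄`, because `∂ₓ z = ∂ₓ z̄ = 1`) and expand the derivatives of the products `z ^ p z̄ ^ q` by the
Leibniz rule. As `D_x = D_z + D_z̄`, and the odd operators `D_z̄`, `D_z̄³` kill the symmetric pair
`z̄ ^ n · z̄ ^ n`, only two terms survive:

* `3 D_z (z ^ n · z ^ j) D_z̄² (z̄ ^ n · z̄ ^ n)
  = 3 (n - j) z ^ (n + j - 1) · (-2 n) z̄ ^ (2 n - 2)`;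
* `D_z³ (z ^ n · z ^ j) z̄ ^ (2 n)`, whose coefficient is
  `(n - j) ((n - j) ^ 2 - 3 (n + j) + 2)`.

The relation between `n` and `j` says `(n - j) ^ 2 = n + j`, which turns the second coefficient into
`2 (j - n) (j + n - 1)`. Since `z` and `z̄` do not vanish, every power can be written as
`z ^ n / z ^ k`, and the claim becomes an identity of rational functions.
-/

open Complex

/-- The `k`-th derivative of `w ↦ w ^ n`. The truncated subtraction in the exponent is harmless,
since the coefficient vanishes for `n < k`. -/
noncomputable def powD (n k : ℕ) (w : ℂ) : ℂ := (n.descFactorial k : ℂ) * w ^ (n - k)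

lemma powD_zero (n : ℕ) (w : ℂ) : powD n 0 w = w ^ n := by simp [powD]

lemma hasDerivAt_powD (n k : ℕ) (w : ℂ) : HasDerivAt (powD n k) (powD n (k + 1) w) w := by
  have h := (hasDerivAt_pow (n - k) w).const_mul (n.descFactorial k : ℂ)
  refine h.congr_deriv ?_
  simp only [powD, Nat.descFactorial_succ, Nat.cast_mul, Nat.sub_sub]
  ring

lemma descFactorial_succ_cast (n k : ℕ) :
    (n.descFactorial (k + 1) : ℂ) = ((n : ℂ) - k) * n.descFactorial k := by
  rcases le_or_gt k n with h | h
  · rw [Nat.descFactorial_succ, Nat.cast_mul, Nat.cast_sub h]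
  · simp [Nat.descFactorial_succ, Nat.descFactorial_of_lt h]

lemma powD_eq_div (n k : ℕ) {w : ℂ} (hw : w ≠ 0) :
    powD n k w = n.descFactorial k * (w ^ n / w ^ k) := by
  rcases le_or_gt k n with h | h
  · rw [powD, pow_sub₀ w hw h, div_eq_mul_inv]
  · simp [powD, Nat.descFactorial_of_lt h]

/-- Leibniz rule for one `x`-derivative of a product of derivatives of powers of `z` and `z̄`. -/
lemma hasDerivAt_powD_mul (p q k l : ℕ) (a b : ℝ) :
    HasDerivAt (fun t : ℝ => powD p k ((t : ℂ) + b * I) * powD q l ((t : ℂ) - b * I))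
      (powD p (k + 1) ((a : ℂ) + b * I) * powD q l ((a : ℂ) - b * I)
        + powD p k ((a : ℂ) + b * I) * powD q (l + 1) ((a : ℂ) - b * I)) a := by
  have h₁ : HasDerivAt (fun t : ℝ => (t : ℂ) + b * I) 1 a :=
    (Complex.ofRealCLM.hasDerivAt (x := a)).add_const _
  have h₂ : HasDerivAt (fun t : ℝ => (t : ℂ) - b * I) 1 a :=
    (Complex.ofRealCLM.hasDerivAt (x := a)).sub_const _
  have h := ((hasDerivAt_powD p k _).comp a h₁).mul ((hasDerivAt_powD q l _).comp a h₂)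
  simp only [mul_one] at h
  exact h

/-- The function `∂ₓᵏ (z ^ p) ∂ₓˡ (z̄ ^ q)` on the plane. -/
noncomputable def mono2 (p q k l : ℕ) (a b : ℝ) : ℂ :=
  powD p k ((a : ℂ) + b * I) * powD q l ((a : ℂ) - b * I)

lemma pdx_mono2 (p q : ℕ) :
    pdx (mono2 p q 0 0) = fun a b => mono2 p q 1 0 a b + mono2 p q 0 1 a b := by
  funext a b
  exact (hasDerivAt_powD_mul p q 0 0 a b).deriv

lemma pdx_pdx_mono2 (p q : ℕ) :
    pdx (pdx (mono2 p q 0 0)) =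
      fun a b => mono2 p q 2 0 a b + 2 * mono2 p q 1 1 a b + mono2 p q 0 2 a b := by
  funext a b
  rw [pdx_mono2]
  refine ((hasDerivAt_powD_mul p q 1 0 a b).add (hasDerivAt_powD_mul p q 0 1 a b)).deriv.trans ?_
  simp only [mono2]
  ring

lemma pdx_pdx_pdx_mono2 (p q : ℕ) :
    pdx (pdx (pdx (mono2 p q 0 0))) =
      fun a b => mono2 p q 3 0 a b + 3 * mono2 p q 2 1 a b + 3 * mono2 p q 1 2 a b
        + mono2 p q 0 3 a b := by
  funext a b
  rw [pdx_pdx_mono2]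
  refine (((hasDerivAt_powD_mul p q 2 0 a b).add
    ((hasDerivAt_powD_mul p q 1 1 a b).const_mul 2)).add
    (hasDerivAt_powD_mul p q 0 2 a b)).deriv.trans ?_
  simp only [mono2]
  ring

/-- if `n(n−1) − 2nj + j(j−1) = 0` then
`D_x³(zⁿz̄ⁿ)·(z^j z̄ⁿ) = (6jn − 6n²) z^{j+n−1} z̄^{2n−2} + 2(j−n)(j+n−1) z^{j+n−3} z̄^{2n}`,
with integer (`zpow`) powers of `z = x+iy` and `z̄ = x−iy`. -/
theorem hirota_Dx3_monomials (n j : ℕ)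
    (hrel : ((n : ℤ) * ((n : ℤ) - 1) - 2 * (n : ℤ) * (j : ℤ) + (j : ℤ) * ((j : ℤ) - 1)) = 0)
    (x y : ℝ) (hxy : (x, y) ≠ ((0 : ℝ), (0 : ℝ)))
    (z zb : ℂ) (hz : z = (x : ℂ) + (y : ℂ) * I) (hzb : zb = (x : ℂ) - (y : ℂ) * I) :
    Dx3 (fun a b => ((a : ℂ) + (b : ℂ) * I)^n * ((a : ℂ) - (b : ℂ) * I)^n)
        (fun a b => ((a : ℂ) + (b : ℂ) * I)^j * ((a : ℂ) - (b : ℂ) * I)^n) x y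
      = (6 * (j : ℂ) * (n : ℂ) - 6 * (n : ℂ)^2)
          * z ^ ((j : ℤ) + (n : ℤ) - 1) * zb ^ (2 * (n : ℤ) - 2)
        + 2 * ((j : ℂ) - (n : ℂ)) * ((j : ℂ) + (n : ℂ) - 1)
          * z ^ ((j : ℤ) + (n : ℤ) - 3) * zb ^ (2 * (n : ℤ)) := by
  have hz0 : z ≠ 0 := by
    rintro rfl
    have h1 := congrArg Complex.re hz
    have h2 := congrArg Complex.im hz
    simp at h1 h2
    exact hxy (by rw [← h1, ← h2])
  have hzb0 : zb ≠ 0 := by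
    rintro rfl
    have h1 := congrArg Complex.re hzb
    have h2 := congrArg Complex.im hzb
    simp at h1 h2
    exact hxy (by rw [← h1, h2])
  have hrelC : (n : ℂ) * (n - 1) - 2 * n * j + j * (j - 1) = 0 := by exact_mod_cast hrel
  have hmono : ∀ p q : ℕ, (fun a b : ℝ => ((a : ℂ) + (b : ℂ) * I)^p * ((a : ℂ) - (b : ℂ) * I)^q)
      = mono2 p q 0 0 := by
    intro p q
    funext a b
    simp only [mono2, powD_zero]
  have e1 : z ^ ((j : ℤ) + (n : ℤ) - 1) = z ^ j * z ^ n / z := by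
    rw [zpow_sub₀ hz0, zpow_add₀ hz0]; simp
  have e2 : z ^ ((j : ℤ) + (n : ℤ) - 3) = z ^ j * z ^ n / z ^ 3 := by
    rw [zpow_sub₀ hz0, zpow_add₀ hz0]; norm_cast
  have e4 : zb ^ (2 * (n : ℤ)) = zb ^ n * zb ^ n := by
    rw [two_mul, zpow_add₀ hzb0]; norm_cast
  have e3 : zb ^ (2 * (n : ℤ) - 2) = zb ^ n * zb ^ n / zb ^ 2 := by
    rw [zpow_sub₀ hzb0, e4]; norm_cast
  rw [hmono, hmono, e1, e2, e3, e4, Dx3]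
  rw [pdx_pdx_pdx_mono2, pdx_pdx_pdx_mono2, pdx_pdx_mono2, pdx_pdx_mono2, pdx_mono2, pdx_mono2]
  simp only [mono2]
  rw [← hz, ← hzb]
  have d1 : ∀ m : ℕ, (m.descFactorial 1 : ℂ) = m := by simp
  have d2 : ∀ m : ℕ, (m.descFactorial 2 : ℂ) = (m - 1) * m := by
    intro m; rw [descFactorial_succ_cast m 1, d1]; simp
  have d3 : ∀ m : ℕ, (m.descFactorial 3 : ℂ) = (m - 2) * ((m - 1) * m) := by
    intro m; rw [descFactorial_succ_cast m 2, d2]; simp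
  simp only [powD_eq_div _ _ hz0, powD_eq_div _ _ hzb0, d1, d2, d3, Nat.descFactorial_zero,
    Nat.cast_one, pow_zero, pow_one, div_one, one_mul]
  -- The powers with symbolic exponents only enter as common factors.
  generalize z ^ n = A
  generalize z ^ j = B
  generalize zb ^ n = C
  linear_combination ((n : ℂ) - j) * (A * B * C ^ 2 / z ^ 3) * hrelC
end

section
/- Let α ∈ ℂ, let f(x,y) = x² + y² + 3 (as a ℂ-valued function on ℝ²), and let g = g_α. Then the pair (f,g) satisfies (D_x² + (1/√3)D_x + (i/√3)D_y) f·g = 0 and (D_x³ − √3 i D_x D_y − D_x − i D_y) f·g = 0 at every point of ℝ². -/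
/-!
Both `f` and `g_α` are polynomials in `z = x + iy` and `z̄ = x - iy`. On such functions
`∂_x = ∂_z + ∂_z̄` and `∂_y = i (∂_z - ∂_z̄)`, where `∂_z`, `∂_z̄` are the formal partial
derivatives (`pdx_evalZ`, `pdy_evalZ`). All the derivatives in the Hirota expressions are therefore
formal ones, and each of the two equations becomes a polynomial identity in `z`, `z̄`, `α`, `√3`
and `i`, valid modulo `√3² = 3` and `i² = -1`.
-/

open Complex

/-- The degree-4 tau function `g_α` from the paper, written in `z = x+iy`, `z̄ = x−iy`. -/
noncomputable def gAlpha (α : ℂ) (x y : ℝ) : ℂ :=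
  let z : ℂ := (x : ℂ) + (y : ℂ) * I
  let zb : ℂ := (x : ℂ) - (y : ℂ) * I
  z^3 * zb + (Real.sqrt 3 : ℂ) * z^3 + (Real.sqrt 3 : ℂ) * z^2 * zb + 12 * z^2
    - 3 * zb^2 + 3 * z * zb + 9 * (Real.sqrt 3 : ℂ) * z + α * zb
    - 36 + (Real.sqrt 3 : ℂ) * α

open MvPolynomial in
/-- The function on `ℝ²` given by a polynomial in the variables `z = x + iy` (index `0`) and
`z̄ = x - iy` (index `1`). -/
noncomputable def evalZ (p : MvPolynomial (Fin 2) ℂ) (x y : ℝ) : ℂ :=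
  eval ![(x : ℂ) + (y : ℂ) * I, (x : ℂ) - (y : ℂ) * I] p

open MvPolynomial in
/-- Chain rule along a differentiable curve in `ℂ²`. -/
lemma hasDerivAt_eval (p : MvPolynomial (Fin 2) ℂ) {u v : ℝ → ℂ} {u' v' : ℂ} {t : ℝ}
    (hu : HasDerivAt u u' t) (hv : HasDerivAt v v' t) :
    HasDerivAt (fun s => eval ![u s, v s] p)
      (u' * eval ![u t, v t] (pderiv 0 p) + v' * eval ![u t, v t] (pderiv 1 p)) t := by
  induction p using MvPolynomial.induction_on with
  | C a => simpa using hasDerivAt_const t a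
  | add p q hp hq =>
    simp only [map_add]
    exact (hp.add hq).congr_deriv (by ring)
  | mul_X p i hp =>
    fin_cases i
    · simp only [map_mul, eval_X]
      refine (hp.mul hu).congr_deriv ?_
      simp [Derivation.leibniz, pderiv_X]
      ring
    · simp only [map_mul, eval_X]
      refine (hp.mul hv).congr_deriv ?_
      simp [Derivation.leibniz, pderiv_X]
      ring

open MvPolynomial in
lemma pdx_evalZ (p : MvPolynomial (Fin 2) ℂ) :
    pdx (evalZ p) = evalZ (pderiv 0 p + pderiv 1 p) := by
  funext x y
  have h : HasDerivAt (fun t : ℝ => (t : ℂ)) 1 x := (hasDerivAt_id x).ofReal_comp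
  refine (hasDerivAt_eval p (h.add_const ((y : ℂ) * I)) (h.sub_const ((y : ℂ) * I))).deriv.trans ?_
  simp [evalZ]

open MvPolynomial in
lemma pdy_evalZ (p : MvPolynomial (Fin 2) ℂ) :
    pdy (evalZ p) = evalZ (C I * (pderiv 0 p - pderiv 1 p)) := by
  funext x y
  have h : HasDerivAt (fun t : ℝ => (t : ℂ) * I) (1 * I) y :=
    HasDerivAt.mul_const (hasDerivAt_id y).ofReal_comp I
  refine (hasDerivAt_eval p (h.const_add (x : ℂ)) (h.const_sub (x : ℂ))).deriv.trans ?_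
  simp [evalZ]
  ring

open MvPolynomial in
lemma f_eq_evalZ :
    (fun a b : ℝ => (a : ℂ) ^ 2 + (b : ℂ) ^ 2 + 3) = evalZ (X 0 * X 1 + C 3) := by
  funext x y
  simp [evalZ]
  linear_combination (y : ℂ) ^ 2 * I_sq

open MvPolynomial in
lemma gAlpha_eq_evalZ (α : ℂ) :
    gAlpha α = evalZ (X 0 ^ 3 * X 1 + C (Real.sqrt 3 : ℂ) * X 0 ^ 3
      + C (Real.sqrt 3 : ℂ) * X 0 ^ 2 * X 1 + C 12 * X 0 ^ 2 - C 3 * X 1 ^ 2 + C 3 * X 0 * X 1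
      + C (9 * (Real.sqrt 3 : ℂ)) * X 0 + C α * X 1 - C 36 + C ((Real.sqrt 3 : ℂ) * α)) := by
  funext x y
  simp [evalZ, gAlpha]

/-- with `f(x,y) = x² + y² + 3`, the pair `(f, g_α)` satisfies the Bäcklund
system `(D_x² + (1/√3)D_x + (i/√3)D_y) f·g = 0` and
`(D_x³ − √3 i D_x D_y − D_x − i D_y) f·g = 0` at every point of `ℝ²`. -/
theorem backlund_lump_to_gAlpha (α : ℂ) :
    (∀ x y : ℝ,
      Dx2 (fun a b => ((a : ℂ)^2 + (b : ℂ)^2 + 3)) (gAlpha α) x y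
        + (1 / (Real.sqrt 3 : ℂ)) * Dx (fun a b => ((a : ℂ)^2 + (b : ℂ)^2 + 3)) (gAlpha α) x y
        + (I / (Real.sqrt 3 : ℂ)) * Dy (fun a b => ((a : ℂ)^2 + (b : ℂ)^2 + 3)) (gAlpha α) x y
        = 0)
    ∧
    (∀ x y : ℝ,
      Dx3 (fun a b => ((a : ℂ)^2 + (b : ℂ)^2 + 3)) (gAlpha α) x y
        - (Real.sqrt 3 : ℂ) * I * Dxy (fun a b => ((a : ℂ)^2 + (b : ℂ)^2 + 3)) (gAlpha α) x y
        - Dx (fun a b => ((a : ℂ)^2 + (b : ℂ)^2 + 3)) (gAlpha α) x y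
        - I * Dy (fun a b => ((a : ℂ)^2 + (b : ℂ)^2 + 3)) (gAlpha α) x y
        = 0) := by
  have h3 : (Real.sqrt 3 : ℂ) ^ 2 = 3 := by
    rw [← ofReal_pow, Real.sq_sqrt (by norm_num)]
    norm_num
  have h0 : (Real.sqrt 3 : ℂ) ≠ 0 := by
    intro h
    norm_num [h] at h3
  have h01 : (0 : Fin 2) ≠ 1 := by decide
  have h10 : (1 : Fin 2) ≠ 0 := by decide
  rw [f_eq_evalZ, gAlpha_eq_evalZ]
  constructor
  · intro x y
    simp only [Dx2, Dx, Dy, pdx_evalZ, pdy_evalZ, evalZ]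
    -- The identity holds with `z` and `z̄` regarded as independent variables.
    generalize (x : ℂ) + (y : ℂ) * I = z
    generalize (x : ℂ) - (y : ℂ) * I = w
    simp only [pow_succ, pow_zero, one_mul, map_add, map_sub, map_mul, map_zero, mul_zero, zero_mul,
      add_zero, zero_add, sub_zero, mul_one, map_one, MvPolynomial.pderiv_mul,
      MvPolynomial.pderiv_C, MvPolynomial.pderiv_X_self, MvPolynomial.pderiv_X_of_ne h01,
      MvPolynomial.pderiv_X_of_ne h10, MvPolynomial.eval_C, MvPolynomial.eval_X,
      Matrix.cons_val_zero, Matrix.cons_val_one]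
    generalize (Real.sqrt 3 : ℂ) = s at *
    field_simp
    ring_nf
    simp only [I_sq]
    linear_combination (30 * z - 2 * z * w ^ 2 - 6 * z ^ 3 - 12 * w + 2 * α) * h3
  · intro x y
    simp only [Dx3, Dxy, Dx, Dy, pdx_evalZ, pdy_evalZ, evalZ]
    generalize (x : ℂ) + (y : ℂ) * I = z
    generalize (x : ℂ) - (y : ℂ) * I = w
    simp only [pow_succ, pow_zero, one_mul, map_add, map_sub, map_mul, map_zero, mul_zero, zero_mul,
      add_zero, zero_add, sub_zero, mul_one, map_one, MvPolynomial.pderiv_mul,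
      MvPolynomial.pderiv_C, MvPolynomial.pderiv_X_self, MvPolynomial.pderiv_X_of_ne h01,
      MvPolynomial.pderiv_X_of_ne h10, MvPolynomial.pderiv_one, MvPolynomial.eval_C,
      MvPolynomial.eval_X, Matrix.cons_val_zero, Matrix.cons_val_one]
    generalize (Real.sqrt 3 : ℂ) = s at *
    ring_nf
    simp only [I_sq]
    linear_combination (18 * z - 2 * z * w ^ 2 + 2 * z ^ 3 - 12 * w) * h3
end

section
/- For every α ∈ ℂ, the function τ = g_α satisfies the bilinear Boussinesq equation τ∂_x⁴τ − 4(∂_xτ)(∂_x³τ) + 3(∂_x²τ)² − τ∂_x²τ + (∂_xτ)² − τ∂_y²τ + (∂_yτ)² = 0 at every point of ℝ². -/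
/-!
In the variables `z = x + iy`, `w = x - iy` one has `∂_x = ∂_z + ∂_w` and `∂_y = i (∂_z - ∂_w)`.
Hence every partial derivative of `gAlpha` is again a polynomial in `z` and `w`. Substituting these
polynomials turns the bilinear equation into a polynomial identity in `z`, `w`, `α` and `√3`,
which holds modulo the relation `√3 ^ 2 = 3`.
-/

open Complex

/-- The function `P` of two independent complex variables `(z, w)`, restricted to `z = x + iy`,
`w = x - iy` and so regarded as a function of the real variables `x`, `y`. -/
def inConj (P : ℂ → ℂ → ℂ) (x y : ℝ) : ℂ :=
  P ((x : ℂ) + (y : ℂ) * I) ((x : ℂ) - (y : ℂ) * I)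

/-- The operator `∂_x` acts on functions of `(z, w)` as the derivative along `(1, 1)`. -/
lemma pdx_inConj {P Q : ℂ → ℂ → ℂ}
    (h : ∀ z w : ℂ, HasDerivAt (fun t : ℂ => P (z + t) (w + t)) (Q z w) 0) :
    pdx (inConj P) = inConj Q := by
  funext x y
  have h0 := h ((x : ℂ) + (y : ℂ) * I) ((x : ℂ) - (y : ℂ) * I)
  rw [← sub_self (x : ℂ)] at h0
  have h1 := (h0.comp_sub_const (x : ℂ) (x : ℂ)).comp_ofReal
  refine HasDerivAt.deriv (h1.congr_of_eventuallyEq (.of_forall fun t => ?_))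
  simp only [inConj]
  congr 1 <;> ring

/-- The operator `∂_y` acts on functions of `(z, w)` as the derivative along `(i, -i)`. -/
lemma pdy_inConj {P Q : ℂ → ℂ → ℂ}
    (h : ∀ z w : ℂ, HasDerivAt (fun t : ℂ => P (z + t * I) (w - t * I)) (Q z w) 0) :
    pdy (inConj P) = inConj Q := by
  funext x y
  have h0 := h ((x : ℂ) + (y : ℂ) * I) ((x : ℂ) - (y : ℂ) * I)
  rw [← sub_self (y : ℂ)] at h0
  have h1 := (h0.comp_sub_const (y : ℂ) (y : ℂ)).comp_ofReal
  refine HasDerivAt.deriv (h1.congr_of_eventuallyEq (.of_forall fun t => ?_))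
  simp only [inConj]
  congr 1 <;> ring

/-- for every `α ∈ ℂ`, the function `τ = g_α` satisfies the bilinear
Boussinesq equation at every point of `ℝ²`. -/
theorem gAlpha_bilinear (α : ℂ) (x y : ℝ) :
    gAlpha α x y * pdx (pdx (pdx (pdx (gAlpha α)))) x y
      - 4 * pdx (gAlpha α) x y * pdx (pdx (pdx (gAlpha α))) x y
      + 3 * (pdx (pdx (gAlpha α)) x y)^2
      - gAlpha α x y * pdx (pdx (gAlpha α)) x y
      + (pdx (gAlpha α) x y)^2
      - gAlpha α x y * pdy (pdy (gAlpha α)) x y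
      + (pdy (gAlpha α) x y)^2 = 0 := by
  set s : ℂ := (Real.sqrt 3 : ℂ) with hs
  have hsq : s ^ 2 = 3 := by
    rw [hs, ← ofReal_pow, Real.sq_sqrt (by norm_num)]
    norm_num
  have hG : gAlpha α = inConj
      (fun z w => z ^ 3 * w + s * z ^ 3 + s * z ^ 2 * w + 12 * z ^ 2 - 3 * w ^ 2 + 3 * z * w
        + 9 * s * z + α * w - 36 + s * α) := rfl
  have hX1 : pdx (gAlpha α) = inConj
      (fun z w => (3 * z ^ 2 * w + 3 * s * z ^ 2 + 2 * s * z * w + 24 * z + 3 * w + 9 * s)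
        + (z ^ 3 + s * z ^ 2 - 6 * w + 3 * z + α)) := by
    rw [hG]
    refine pdx_inConj fun z w => ?_
    refine (DifferentiableAt.hasDerivAt (by fun_prop)).congr_deriv ?_
    simp (disch := fun_prop) [deriv_fun_sub, deriv_fun_add, deriv_fun_mul, deriv_fun_pow]
    ring
  have hX2 : pdx (pdx (gAlpha α)) = inConj
      (fun z w => 6 * z ^ 2 + 6 * z * w + 10 * s * z + 2 * s * w + 24) := by
    rw [hX1]
    refine pdx_inConj fun z w => ?_
    refine (DifferentiableAt.hasDerivAt (by fun_prop)).congr_deriv ?_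
    simp (disch := fun_prop) [deriv_fun_sub, deriv_fun_add, deriv_fun_mul, deriv_fun_pow]
    ring
  have hX3 : pdx (pdx (pdx (gAlpha α))) = inConj
      (fun z w => 18 * z + 6 * w + 12 * s) := by
    rw [hX2]
    refine pdx_inConj fun z w => ?_
    refine (DifferentiableAt.hasDerivAt (by fun_prop)).congr_deriv ?_
    simp (disch := fun_prop) [deriv_fun_add, deriv_fun_mul, deriv_fun_pow]
    ring
  have hX4 : pdx (pdx (pdx (pdx (gAlpha α)))) = inConj
      (fun _ _ => 24) := by
    rw [hX3]
    refine pdx_inConj fun z w => ?_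
    refine (DifferentiableAt.hasDerivAt (by fun_prop)).congr_deriv ?_
    simp (disch := fun_prop) [deriv_fun_add, deriv_fun_mul]
    ring
  -- As in `hX1`, the two polynomials are `∂_z g` and `∂_w g`.
  have hY1 : pdy (gAlpha α) = inConj
      (fun z w => I * ((3 * z ^ 2 * w + 3 * s * z ^ 2 + 2 * s * z * w + 24 * z + 3 * w + 9 * s)
        - (z ^ 3 + s * z ^ 2 - 6 * w + 3 * z + α))) := by
    rw [hG]
    refine pdy_inConj fun z w => ?_
    refine (DifferentiableAt.hasDerivAt (by fun_prop)).congr_deriv ?_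
    simp (disch := fun_prop) [deriv_fun_sub, deriv_fun_add, deriv_fun_mul, deriv_fun_pow]
    ring
  -- The expression in parentheses is `∂_z² g - 2 ∂_z ∂_w g + ∂_w² g`.
  have hY2 : pdy (pdy (gAlpha α)) = inConj
      (fun z w => -(6 * z * w + 6 * s * z + 2 * s * w + 24
        - 2 * (3 * z ^ 2 + 2 * s * z + 3) - 6)) := by
    rw [hY1]
    refine pdy_inConj fun z w => ?_
    refine (DifferentiableAt.hasDerivAt (by fun_prop)).congr_deriv ?_
    simp (disch := fun_prop) [deriv_fun_sub, deriv_fun_add, deriv_fun_mul, deriv_fun_pow]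
    linear_combination (6 * z * w + 6 * s * z + 2 * s * w + 24
      - 2 * (3 * z ^ 2 + 2 * s * z + 3) - 6) * I_sq
  rw [hX4, hX3, hX2, hX1, hY2, hY1, hG]
  simp only [inConj]
  generalize (x : ℂ) + (y : ℂ) * I = z
  generalize (x : ℂ) - (y : ℂ) * I = w
  -- The coefficient of `I_sq` is `(∂_z g - ∂_w g) ^ 2`, coming from `(∂_y g) ^ 2`; the coefficient of
  -- `hsq` collects the terms of the expression that are quadratic in `s`.
  linear_combination (4 * z ^ 4 + 72 * z ^ 2 + 24 * z * w + 12 * w ^ 2 - 432 - 8 * z * α) * hsq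
    + ((3 * z ^ 2 * w + 3 * s * z ^ 2 + 2 * s * z * w + 24 * z + 3 * w + 9 * s)
      - (z ^ 3 + s * z ^ 2 - 6 * w + 3 * z + α)) ^ 2 * I_sq
end
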